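/- For any θ ∈ (0, 1/2) and any μ with 0 < μ ≤ 1/(20√n), for every w ∈ ℝ^{n−1} with ‖w‖ ≤ μ/(4√2), the Hessian in w of the expected objective satisfies ∇²_w E[h_μ(q(w)ᵀ x)] ⪰ (θ/(5√(2π) μ)) I, where x ∈ ℝ^n is a random vector with i.i.d. BG(θ) entries and I is the (n−1)×(n−1) identity matrix. -/

import Mathlib

open MeasureTheory ProbabilityTheory Real Matrix
open scoped RealInnerProductSpace ENNReal NNReal

noncomputable section

/-- The Bernoulli–Gaussian law `BG(θ)`: with probability `θ` a standard Gaussian,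
with probability `1-θ` a point mass at `0`. -/
def bg (θ : ℝ) : Measure ℝ :=
  θ.toNNReal • gaussianReal 0 1 + (1 - θ).toNNReal • Measure.dirac 0

instance bg.instIsFiniteMeasure (θ : ℝ) : IsFiniteMeasure (bg θ) := by
  unfold bg; infer_instance

/-- Law of an `n × p` matrix with i.i.d. `BG(θ)` entries. -/
def bgMatrix (θ : ℝ) (n p : ℕ) : Measure (Fin n → Fin p → ℝ) :=
  Measure.pi fun _ => Measure.pi fun _ => bg θ

/-- Law of a vector in `ℝ^n` with i.i.d. `BG(θ)` entries. -/
def bgVec (θ : ℝ) (n : ℕ) : Measure (Fin n → ℝ) :=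
  Measure.pi fun _ => bg θ

/-- The smooth sparsity surrogate `h_μ(z) = μ log cosh (z/μ)`. -/
def hmu (μ z : ℝ) : ℝ := μ * Real.log (Real.cosh (z / μ))

/-- Reparametrization `q(w) = (w, √(1-‖w‖²))` with `w` in the unit ball of `ℝ^{n-1}`. -/
def qmap (n : ℕ) (w : EuclideanSpace ℝ (Fin (n - 1))) : Fin n → ℝ :=
  fun i => if h : (i : ℕ) < n - 1 then w ⟨i, h⟩ else Real.sqrt (1 - ‖w‖ ^ 2)

/-- `f(q; Y) = (1/p) ∑ₖ h_μ(qᵀ yₖ)`. -/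
def ffun (n p : ℕ) (μ : ℝ) (Y : Matrix (Fin n) (Fin p) ℝ)
    (q : EuclideanSpace ℝ (Fin n)) : ℝ :=
  (p : ℝ)⁻¹ * ∑ k : Fin p, hmu μ (∑ i : Fin n, q i * Y i k)

/-- `g(w; Y) = f(q(w); Y)`. -/
def gfun (n p : ℕ) (μ : ℝ) (Y : Matrix (Fin n) (Fin p) ℝ)
    (w : EuclideanSpace ℝ (Fin (n - 1))) : ℝ :=
  (p : ℝ)⁻¹ * ∑ k : Fin p, hmu μ (∑ i : Fin n, qmap n w i * Y i k)

/-- Gradient `∇g(w; Y)` in `w`. -/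
def gradg (n p : ℕ) (μ : ℝ) (Y : Matrix (Fin n) (Fin p) ℝ)
    (w : EuclideanSpace ℝ (Fin (n - 1))) : EuclideanSpace ℝ (Fin (n - 1)) :=
  gradient (gfun n p μ Y) w

/-- Hessian `∇²g(w; Y)` in `w`, as a continuous linear map. -/
def hessg (n p : ℕ) (μ : ℝ) (Y : Matrix (Fin n) (Fin p) ℝ)
    (w : EuclideanSpace ℝ (Fin (n - 1))) :
    EuclideanSpace ℝ (Fin (n - 1)) →L[ℝ] EuclideanSpace ℝ (Fin (n - 1)) :=
  fderiv ℝ (gradg n p μ Y) w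

/-- The set `Γ = {w : ‖w‖ < √((4n-1)/(4n))}`. -/
def GammaSet (n : ℕ) : Set (EuclideanSpace ℝ (Fin (n - 1))) :=
  {w | ‖w‖ < Real.sqrt ((4 * (n : ℝ) - 1) / (4 * n))}

/-- Spectral (`ℓ²→ℓ²` operator) norm of а matrix. -/
def specNorm {m k : ℕ} (M : Matrix (Fin m) (Fin k) ℝ) : ℝ :=
  ‖LinearMap.toContinuousLinearMap (Matrix.toEuclideanLin M)‖

/-- Largest magnitude of an entry of a matrix. -/
def Minf {m k : ℕ} (M : Matrix (Fin m) (Fin k) ℝ) : ℝ := ⨆ i, ⨆ j, |M i j|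

/-- Condition number: ratio of largest to smallest singular value. -/
def kappa {n : ℕ} (s : Fin n → ℝ) : ℝ := (⨆ i, s i) / (⨅ i, s i)

/-- Signed standard basis vectors `{± e_i}` of `ℝ^n`. -/
def SignedBasis (n : ℕ) : Set (EuclideanSpace ℝ (Fin n)) :=
  {b | ∃ i : Fin n, b = EuclideanSpace.single i (1 : ℝ) ∨ b = -EuclideanSpace.single i (1 : ℝ)}

/-- Set of local minimizers of `f(·; Y)` over the unit sphere `S^{n-1}`. -/
def LocalMins (n p : ℕ) (μ : ℝ) (Y : Matrix (Fin n) (Fin p) ℝ) :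
    Set (EuclideanSpace ℝ (Fin n)) :=
  {q | q ∈ Metric.sphere (0 : EuclideanSpace ℝ (Fin n)) 1 ∧
       IsLocalMinOn (ffun n p μ Y) (Metric.sphere (0 : EuclideanSpace ℝ (Fin n)) 1) q}

/-- Expected objective `E_x[h_μ(q(w)ᵀ x)]` for `x` with i.i.d. `BG(θ)` entries. -/
def Gexp (n : ℕ) (θ μ : ℝ) (w : EuclideanSpace ℝ (Fin (n - 1))) : ℝ :=
  ∫ x, hmu μ (∑ i : Fin n, qmap n w i * x i) ∂(bgVec θ n)

/-!
Splitting off the last coordinate, write `x = (x', z)` with `z ∼ BG(θ)` independent of `x'`. Since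
`h_μ'' = sech²(·/μ)/μ` and `h_μ' = tanh(·/μ)`, the second derivative of `E[h_μ(q(w)ᵀx)]` in the
direction `v` is
`E[sech²(qᵀx/μ) (Dq(v)ᵀx)²]/μ - E[tanh(qᵀx/μ) z] (‖v‖²/r + ⟪w, v⟫²/r³)` with `r = √(1 - ‖w‖²)`.

The first expectation is at least its contribution from the event `z = 0`, of probability at least
`1 - θ`, on which `q(w)ᵀx = wᵀx'` and `Dq(v)ᵀx = vᵀx'`. There `sech² t ≥ 1 - t²` reduces it to the
moments `E(vᵀx')² = θ‖v‖²` and `E(wᵀx')²(vᵀx')² ≤ 3θ‖w‖²‖v‖²`, which gives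
`θ(1 - θ)(1 - 3‖w‖²/μ²)‖v‖²/μ`. The curvature term is at most `E|z| ‖v‖²/r³ ≤ θ‖v‖²/r³`, and the
factor `1/μ` makes the first term dominate when `‖w‖ ≤ μ/(4√2)`.
-/

section RidgeIntegral

variable {Ω E F G : Type*} [MeasurableSpace Ω] {P : Measure Ω}
  [NormedAddCommGroup E] [NormedSpace ℝ E] [NormedAddCommGroup F] [NormedSpace ℝ F]
  [NormedAddCommGroup G] [NormedSpace ℝ G]

lemma abs_le_of_hasDerivAt_of_abs_deriv_le {φ φ' : ℝ → ℝ} {C : ℝ}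
    (hφ : ∀ t, HasDerivAt φ (φ' t) t) (hC : ∀ t, |φ' t| ≤ C) (t : ℝ) :
    |φ t| ≤ |φ 0| + C * |t| := by
  have h : |φ t - φ 0| ≤ C * |t - 0| :=
    convex_univ.norm_image_sub_le_of_norm_hasDerivWithin_le
      (fun s _ ↦ (hφ s).hasDerivWithinAt) (fun s _ ↦ hC s) (Set.mem_univ 0) (Set.mem_univ t)
  rw [sub_zero] at h
  linarith [abs_sub_abs_le_abs_sub (φ t) (φ 0)]

lemma measurable_of_hasDerivAt {φ φ' : ℝ → ℝ} (hφ : ∀ t, HasDerivAt φ (φ' t) t) :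
    Measurable φ' := by
  rw [← funext fun t ↦ (hφ t).deriv]
  exact measurable_deriv φ

lemma norm_smul_clm_smulRight_le {c C : ℝ} (hc : |c| ≤ C) (ℓ : F →L[ℝ] ℝ) (y : G) :
    ‖(c • ℓ).smulRight y‖ ≤ C * (‖ℓ‖ * ‖y‖) := by
  rw [ContinuousLinearMap.norm_smulRight_apply, norm_smul, Real.norm_eq_abs, mul_assoc]
  gcongr

lemma integrable_comp_clm_smulRight {ψ : ℝ → ℝ} {C : ℝ} (hψ : Measurable ψ) (hC : ∀ t, |ψ t| ≤ C)
    {L : Ω → F →L[ℝ] ℝ} {M : Ω → G} (hL : AEStronglyMeasurable L P)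
    (hM : AEStronglyMeasurable M P) (hLM : Integrable (fun ω ↦ ‖L ω‖ * ‖M ω‖) P) (q : F) :
    Integrable (fun ω ↦ (ψ (L ω q) • L ω).smulRight (M ω)) P := by
  have hLq : AEMeasurable (fun ω ↦ L ω q) P := (hL.apply_continuousLinearMap q).aemeasurable
  have hψL := (hψ.comp_aemeasurable hLq).aestronglyMeasurable.smul hL
  refine (hLM.const_mul C).mono' ((ContinuousLinearMap.smulRightL ℝ F G).continuous₂
    |>.comp_aestronglyMeasurable (hψL.prodMk hM)) (ae_of_all _ fun ω ↦ ?_)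
  exact norm_smul_clm_smulRight_le (hC _) _ _

lemma integrable_comp_clm_smul {φ φ' : ℝ → ℝ} {C : ℝ} (hφ : ∀ t, HasDerivAt φ (φ' t) t)
    (hC : ∀ t, |φ' t| ≤ C) {L : Ω → F →L[ℝ] ℝ} {M : Ω → G} (hL : AEStronglyMeasurable L P)
    (hM : Integrable M P) (hLM : Integrable (fun ω ↦ ‖L ω‖ * ‖M ω‖) P) (q : F) :
    Integrable (fun ω ↦ φ (L ω q) • M ω) P := by
  have hφc : Continuous φ := continuous_iff_continuousAt.2 fun t ↦ (hφ t).continuousAt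
  have hC0 : 0 ≤ C := (abs_nonneg _).trans (hC 0)
  refine ((hM.norm.const_mul |φ 0|).add (hLM.const_mul (C * ‖q‖))).mono'
    ((hφc.comp_aestronglyMeasurable (hL.apply_continuousLinearMap q)).smul hM.1)
    (ae_of_all _ fun ω ↦ ?_)
  calc ‖φ (L ω q) • M ω‖ = |φ (L ω q)| * ‖M ω‖ := norm_smul _ _
    _ ≤ (|φ 0| + C * (‖L ω‖ * ‖q‖)) * ‖M ω‖ := by
      gcongr
      refine (abs_le_of_hasDerivAt_of_abs_deriv_le hφ hC _).trans ?_
      gcongr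
      exact (L ω).le_opNorm q
    _ = |φ 0| * ‖M ω‖ + C * ‖q‖ * (‖L ω‖ * ‖M ω‖) := by ring

theorem hasFDerivAt_integral_comp_clm_smul {φ φ' : ℝ → ℝ} {C : ℝ}
    (hφ : ∀ t, HasDerivAt φ (φ' t) t) (hC : ∀ t, |φ' t| ≤ C)
    {L : Ω → F →L[ℝ] ℝ} {M : Ω → G} (hL : AEStronglyMeasurable L P) (hM : Integrable M P)
    (hLM : Integrable (fun ω ↦ ‖L ω‖ * ‖M ω‖) P) (q : F) :
    HasFDerivAt (fun q ↦ ∫ ω, φ (L ω q) • M ω ∂P)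
      (∫ ω, (φ' (L ω q) • L ω).smulRight (M ω) ∂P) q := by
  have hint (p : F) : Integrable (fun ω ↦ φ (L ω p) • M ω) P :=
    integrable_comp_clm_smul hφ hC hL hM hLM p
  have hint' : Integrable (fun ω ↦ (φ' (L ω q) • L ω).smulRight (M ω)) P :=
    integrable_comp_clm_smulRight (measurable_of_hasDerivAt hφ) hC hL hM.1 hLM q
  refine hasFDerivAt_integral_of_dominated_of_fderiv_le
    (F' := fun p ω ↦ (φ' (L ω p) • L ω).smulRight (M ω)) Filter.univ_mem
    (Filter.Eventually.of_forall fun p ↦ (hint p).1) (hint q) hint'.1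
    (ae_of_all _ fun _ _ _ ↦ norm_smul_clm_smulRight_le (hC _) _ _)
    (hLM.const_mul C) (ae_of_all _ fun ω p _ ↦ ?_)
  exact ((hφ _).comp_hasFDerivAt p (L ω).hasFDerivAt).smul_const (M ω)

lemma fderiv_fderiv_comp_apply {g : F → ℝ} {g' : F → F →L[ℝ] ℝ} {g'' : F →L[ℝ] F →L[ℝ] ℝ}
    {q : E → F} {w : E} (hg : ∀ p, HasFDerivAt g (g' p) p) (hg' : HasFDerivAt g' g'' (q w))
    (hq : ContDiffAt ℝ 2 q w) (u v : E) :
    fderiv ℝ (fderiv ℝ (g ∘ q)) w u v =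
      g'' (fderiv ℝ q w u) (fderiv ℝ q w v) + g' (q w) (fderiv ℝ (fderiv ℝ q) w u v) := by
  have hq1 : DifferentiableAt ℝ q w := hq.differentiableAt (by simp)
  have hq2 : DifferentiableAt ℝ (fderiv ℝ q) w :=
    (hq.fderiv_right (m := 1) (by norm_num)).differentiableAt (by simp)
  have hfirst : fderiv ℝ (g ∘ q) =ᶠ[nhds w] fun p ↦ (g' (q p)).comp (fderiv ℝ q p) := by
    filter_upwards [hq.eventually (by simp)] with p hp
    exact ((hg _).comp p (hp.differentiableAt (by simp)).hasFDerivAt).fderiv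
  have hsecond := (hg'.comp w hq1.hasFDerivAt).clm_comp hq2.hasFDerivAt
  rw [(hsecond.congr_of_eventuallyEq hfirst).fderiv]
  simp [add_comm]

lemma fderiv_fderiv_clm_comp_apply (ℓ : F →L[ℝ] G) {q : E → F} {w : E}
    (hq : ContDiffAt ℝ 2 q w) (u v : E) :
    fderiv ℝ (fderiv ℝ (ℓ ∘ q)) w u v = ℓ (fderiv ℝ (fderiv ℝ q) w u v) := by
  simpa [iteratedFDeriv_two_apply] using
    congr($(ℓ.iteratedFDeriv_comp_left hq (i := 2) le_rfl) ![u, v])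

theorem fderiv_fderiv_integral_comp_apply [IsFiniteMeasure P] {φ φ' φ'' : ℝ → ℝ} {C C' : ℝ}
    (hφ : ∀ t, HasDerivAt φ (φ' t) t) (hφ' : ∀ t, HasDerivAt φ' (φ'' t) t)
    (hC : ∀ t, |φ' t| ≤ C) (hC' : ∀ t, |φ'' t| ≤ C') {L : Ω → F →L[ℝ] ℝ} (hL : MemLp L 2 P)
    {q : E → F} {w : E} (hq : ContDiffAt ℝ 2 q w) (u v : E) :
    fderiv ℝ (fderiv ℝ fun w ↦ ∫ ω, φ (L ω (q w)) ∂P) w u v =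
      ∫ ω, φ'' (L ω (q w)) * (L ω (fderiv ℝ q w u) * L ω (fderiv ℝ q w v)) ∂P +
        ∫ ω, φ' (L ω (q w)) * L ω (fderiv ℝ (fderiv ℝ q) w u v) ∂P := by
  have hL1 : Integrable L P := hL.integrable one_le_two
  have hLL : Integrable (fun ω ↦ ‖L ω‖ * ‖L ω‖) P := by
    simpa only [← sq] using hL.integrable_norm_pow two_ne_zero
  have hg (p : F) : HasFDerivAt (fun p ↦ ∫ ω, φ (L ω p) ∂P) (∫ ω, φ' (L ω p) • L ω ∂P) p := by
    have h := hasFDerivAt_integral_comp_clm_smul hφ hC hL1.1 (integrable_const (1 : ℝ))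
      (by simpa using hL1.norm) p
    convert! h using 3
    · simp
    · ext
      simp
  have hg' := hasFDerivAt_integral_comp_clm_smul hφ' hC' hL1.1 hL1 hLL (q w)
  have hint' := integrable_comp_clm_smul hφ' hC' hL1.1 hL1 hLL (q w)
  have hint'' := integrable_comp_clm_smulRight (measurable_of_hasDerivAt hφ') hC' hL1.1 hL1.1 hLL
    (q w)
  have h := fderiv_fderiv_comp_apply hg hg' hq u v
  rw [ContinuousLinearMap.integral_apply hint'',
    ContinuousLinearMap.integral_apply (hint''.apply_continuousLinearMap _),
    ContinuousLinearMap.integral_apply hint'] at h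
  simpa [Function.comp_def, mul_assoc] using h

end RidgeIntegral

lemma one_sub_norm_sq_pos {E : Type*} [SeminormedAddCommGroup E] {w : E} (hw : ‖w‖ < 1) :
    0 < 1 - ‖w‖ ^ 2 :=
  sub_pos.2 (pow_lt_one₀ (norm_nonneg w) hw two_ne_zero)

section SphereChart

variable {E : Type*} [NormedAddCommGroup E] [InnerProductSpace ℝ E] {w : E}

/-- The graph chart `w ↦ (w, √(1 - ‖w‖²))` of the upper unit hemisphere of `E × ℝ` over the unit
ball of `E`; it is the map `q` of the theorem with the last coordinate split off. Only derivatives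
are taken in `E × ℝ`, so its sup norm is harmless. -/
def sphereChart (w : E) : E × ℝ := (w, √(1 - ‖w‖ ^ 2))

lemma contDiffAt_sphereChart (hw : ‖w‖ < 1) {n : WithTop ℕ∞} : ContDiffAt ℝ n sphereChart w :=
  contDiffAt_id.prodMk
    ((contDiffAt_const.sub (contDiff_norm_sq ℝ).contDiffAt).sqrt (one_sub_norm_sq_pos hw).ne')

lemma hasFDerivAt_sqrt_one_sub_norm_sq (hw : ‖w‖ < 1) :
    HasFDerivAt (fun w : E ↦ √(1 - ‖w‖ ^ 2)) (-(√(1 - ‖w‖ ^ 2))⁻¹ • innerSL ℝ w) w := by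
  have h := ((hasStrictFDerivAt_norm_sq w).hasFDerivAt.const_sub 1).sqrt
    (one_sub_norm_sq_pos hw).ne'
  convert! h using 1
  ext v
  simp only [neg_smul, _root_.neg_apply, _root_.smul_apply, coe_innerSL_apply, smul_eq_mul, one_div,
    _root_.mul_inv_rev, smul_neg, nsmul_eq_mul, Nat.cast_ofNat, neg_inj]
  ring

lemma fderiv_sphereChart (hw : ‖w‖ < 1) :
    fderiv ℝ sphereChart w =
      (ContinuousLinearMap.id ℝ E).prod (-(√(1 - ‖w‖ ^ 2))⁻¹ • innerSL ℝ w) :=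
  ((hasFDerivAt_id w).prodMk (hasFDerivAt_sqrt_one_sub_norm_sq hw)).fderiv

lemma fderiv_fderiv_sqrt_one_sub_norm_sq_apply (hw : ‖w‖ < 1) (v : E) :
    fderiv ℝ (fderiv ℝ fun w : E ↦ √(1 - ‖w‖ ^ 2)) w v v =
      -(‖v‖ ^ 2 / √(1 - ‖w‖ ^ 2) + ⟪w, v⟫ ^ 2 / √(1 - ‖w‖ ^ 2) ^ 3) := by
  have hfirst : fderiv ℝ (fun w : E ↦ √(1 - ‖w‖ ^ 2)) =ᶠ[nhds w]
      fun w ↦ -(√(1 - ‖w‖ ^ 2))⁻¹ • innerSL ℝ w := by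
    filter_upwards [continuous_norm.continuousAt.eventually_lt_const hw] with p hp
    exact (hasFDerivAt_sqrt_one_sub_norm_sq hp).fderiv
  have hr : √(1 - ‖w‖ ^ 2) ≠ 0 := (sqrt_pos.2 (one_sub_norm_sq_pos hw)).ne'
  have hsecond := ((hasDerivAt_inv hr).comp_hasFDerivAt w
    (hasFDerivAt_sqrt_one_sub_norm_sq hw)).fun_neg.fun_smul (innerSL ℝ (E := E)).hasFDerivAt
  rw [(hsecond.congr_of_eventuallyEq hfirst).fderiv]
  change -(√(1 - ‖w‖ ^ 2))⁻¹ * ⟪v, v⟫ +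
    -(-(√(1 - ‖w‖ ^ 2) ^ 2)⁻¹ * (-(√(1 - ‖w‖ ^ 2))⁻¹ * ⟪w, v⟫)) * ⟪w, v⟫ = _
  rw [real_inner_self_eq_norm_sq]
  field_simp
  ring

lemma fderiv_fderiv_sphereChart_apply (hw : ‖w‖ < 1) (v : E) :
    fderiv ℝ (fderiv ℝ sphereChart) w v v =
      (0, -(‖v‖ ^ 2 / √(1 - ‖w‖ ^ 2) + ⟪w, v⟫ ^ 2 / √(1 - ‖w‖ ^ 2) ^ 3)) := by
  refine Prod.ext ?_ ?_
  · have h := fderiv_fderiv_clm_comp_apply (ContinuousLinearMap.fst ℝ E ℝ)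
      (contDiffAt_sphereChart hw) v v
    have hid : fderiv ℝ (ContinuousLinearMap.fst ℝ E ℝ ∘ sphereChart) =
        fun _ ↦ ContinuousLinearMap.id ℝ E := funext fun _ ↦ fderiv_id
    rw [hid, fderiv_fun_const] at h
    exact h.symm
  · exact (fderiv_fderiv_clm_comp_apply (ContinuousLinearMap.snd ℝ E ℝ)
      (contDiffAt_sphereChart hw) v v).symm.trans (fderiv_fderiv_sqrt_one_sub_norm_sq_apply hw v)

lemma norm_sq_div_add_inner_sq_div_le (hw : ‖w‖ < 1) (v : E) :
    ‖v‖ ^ 2 / √(1 - ‖w‖ ^ 2) + ⟪w, v⟫ ^ 2 / √(1 - ‖w‖ ^ 2) ^ 3 ≤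
      ‖v‖ ^ 2 / √(1 - ‖w‖ ^ 2) ^ 3 := by
  have hr : 0 < √(1 - ‖w‖ ^ 2) := sqrt_pos.2 (one_sub_norm_sq_pos hw)
  have hr2 : √(1 - ‖w‖ ^ 2) ^ 2 = 1 - ‖w‖ ^ 2 := Real.sq_sqrt (one_sub_norm_sq_pos hw).le
  have hcs : ⟪w, v⟫ ^ 2 ≤ ‖w‖ ^ 2 * ‖v‖ ^ 2 := by
    rw [← mul_pow, sq_le_sq, abs_of_nonneg (mul_nonneg (norm_nonneg w) (norm_nonneg v))]
    exact abs_real_inner_le_norm w v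
  calc ‖v‖ ^ 2 / √(1 - ‖w‖ ^ 2) + ⟪w, v⟫ ^ 2 / √(1 - ‖w‖ ^ 2) ^ 3
      = ((1 - ‖w‖ ^ 2) * ‖v‖ ^ 2 + ⟪w, v⟫ ^ 2) / √(1 - ‖w‖ ^ 2) ^ 3 := by
        field_simp
        rw [hr2]
    _ ≤ ‖v‖ ^ 2 / √(1 - ‖w‖ ^ 2) ^ 3 := by
        gcongr
        linarith

end SphereChart

lemma integrable_pow_of_memLp {α : Type*} [MeasurableSpace α] {μ : Measure α} [IsFiniteMeasure μ]
    {f : α → ℝ} {k n : ℕ} (hf : MemLp f n μ) (hk : k ≤ n) : Integrable (fun x ↦ f x ^ k) μ := by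
  rw [← integrable_norm_iff (hf.1.fun_pow k)]
  simpa only [norm_pow] using (hf.mono_exponent (Nat.cast_le.2 hk)).integrable_norm_pow'

section ProductMoments

variable {α β : Type*} [MeasurableSpace α] [MeasurableSpace β] {μ : Measure α} {ν : Measure β}
  [IsProbabilityMeasure μ] [IsProbabilityMeasure ν] {f : α → ℝ} {g : β → ℝ}

lemma integral_add_sq_prod (hf : MemLp f 2 μ) (hg : MemLp g 2 ν) (hg1 : ∫ y, g y ∂ν = 0) :
    ∫ p, (f p.1 + g p.2) ^ 2 ∂(μ.prod ν) = ∫ x, f x ^ 2 ∂μ + ∫ y, g y ^ 2 ∂ν := by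
  have hff := hf.integrable_sq.comp_fst ν
  have hgg := hg.integrable_sq.comp_snd μ
  have hfg := ((hf.integrable one_le_two).mul_prod (hg.integrable one_le_two)).const_mul 2
  calc ∫ p, (f p.1 + g p.2) ^ 2 ∂(μ.prod ν)
      = ∫ p, (f p.1 ^ 2 + 2 * (f p.1 * g p.2) + g p.2 ^ 2) ∂(μ.prod ν) := by
        congr with p
        ring
    _ = _ := by
        rw [integral_add (hff.fun_add hfg) hgg, integral_add hff hfg, integral_const_mul,
          integral_prod_mul, hg1, integral_fun_fst (fun x ↦ f x ^ 2),
          integral_fun_snd (fun y ↦ g y ^ 2)]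
        simp

lemma integral_add_pow_four_prod (hf : MemLp f 4 μ) (hg : MemLp g 4 ν)
    (hg1 : ∫ y, g y ∂ν = 0) (hg3 : ∫ y, g y ^ 3 ∂ν = 0) :
    ∫ p, (f p.1 + g p.2) ^ 4 ∂(μ.prod ν) =
      ∫ x, f x ^ 4 ∂μ + 6 * ((∫ x, f x ^ 2 ∂μ) * ∫ y, g y ^ 2 ∂ν) + ∫ y, g y ^ 4 ∂ν := by
  have hfk {k : ℕ} (hk : k ≤ 4) : Integrable (fun x ↦ f x ^ k) μ := integrable_pow_of_memLp hf hk
  have hgk {k : ℕ} (hk : k ≤ 4) : Integrable (fun y ↦ g y ^ k) ν := integrable_pow_of_memLp hg hk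
  have h4 := (hfk le_rfl).comp_fst ν
  have h3 := ((hfk (k := 3) (by simp)).mul_prod (hg.integrable (by norm_num))).const_mul 4
  have h2 := ((hfk (k := 2) (by simp)).mul_prod (hgk (k := 2) (by simp))).const_mul 6
  have h1 := ((hf.integrable (by norm_num)).mul_prod (hgk (k := 3) (by simp))).const_mul 4
  have h0 := (hgk le_rfl).comp_snd μ
  calc ∫ p, (f p.1 + g p.2) ^ 4 ∂(μ.prod ν)
      = ∫ p, (f p.1 ^ 4 + 4 * (f p.1 ^ 3 * g p.2) + 6 * (f p.1 ^ 2 * g p.2 ^ 2) +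
          4 * (f p.1 * g p.2 ^ 3) + g p.2 ^ 4) ∂(μ.prod ν) := by
        congr with p
        ring
    _ = _ := by
        rw [integral_add (((h4.fun_add h3).fun_add h2).fun_add h1) h0,
          integral_add ((h4.fun_add h3).fun_add h2) h1, integral_add (h4.fun_add h3) h2,
          integral_add h4 h3]
        simp only [integral_const_mul, integral_prod_mul (fun x ↦ f x ^ 3) g,
          integral_prod_mul (fun x ↦ f x ^ 2) (fun y ↦ g y ^ 2),
          integral_prod_mul f (fun y ↦ g y ^ 3), hg1, hg3, integral_fun_fst (fun x ↦ f x ^ 4),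
          integral_fun_snd (fun y ↦ g y ^ 4), probReal_univ, one_smul, mul_zero, add_zero]

end ProductMoments

section Pi

lemma integral_pi_succ_eq_integral_prod {X H : Type*} [MeasurableSpace X] [NormedAddCommGroup H]
    [NormedSpace ℝ H] (ν : Measure X) [SigmaFinite ν] (m : ℕ) (f : (Fin (m + 1) → X) → H) :
    ∫ x, f x ∂(Measure.pi fun _ ↦ ν) =
      ∫ p, f (Fin.snoc p.1 p.2) ∂((Measure.pi fun _ : Fin m ↦ ν).prod ν) := by
  have e := (measurePreserving_piFinSuccAbove (fun _ : Fin (m + 1) ↦ ν) (Fin.last m)).symm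
  rw [← e.integral_comp', ← integral_prod_swap]
  simp [MeasurableEquiv.piFinSuccAbove_symm_apply, Fin.insertNthEquiv]

variable {ν : Measure ℝ} [IsProbabilityMeasure ν] {m : ℕ}

lemma memLp_eval_pi {p : ℝ≥0∞} (hν : MemLp (fun z ↦ z) p ν) (i : Fin m) :
    MemLp (fun x : Fin m → ℝ ↦ x i) p (Measure.pi fun _ ↦ ν) :=
  hν.comp_measurePreserving (measurePreserving_eval (fun _ : Fin m ↦ ν) i)

lemma memLp_dotProduct_pi {p : ℝ≥0∞} (hν : MemLp (fun z ↦ z) p ν) (a : Fin m → ℝ) :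
    MemLp (fun x : Fin m → ℝ ↦ a ⬝ᵥ x) p (Measure.pi fun _ ↦ ν) :=
  memLp_finsetSum _ fun i _ ↦ (memLp_eval_pi hν i).const_mul (a i)

lemma dotProduct_snoc (a : Fin (m + 1) → ℝ) (x : Fin m → ℝ) (z : ℝ) :
    a ⬝ᵥ Fin.snoc x z = Fin.init a ⬝ᵥ x + a (Fin.last m) * z := by
  simp [dotProduct, Fin.sum_univ_castSucc, Fin.init_def]

lemma dotProduct_self_succ (a : Fin (m + 1) → ℝ) :
    a ⬝ᵥ a = Fin.init a ⬝ᵥ Fin.init a + a (Fin.last m) ^ 2 := by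
  simp [dotProduct, Fin.sum_univ_castSucc, Fin.init_def, sq]

lemma integral_sq_dotProduct_pi (hν : MemLp (fun z ↦ z) 2 ν) (hν1 : ∫ z, z ∂ν = 0) (a : Fin m → ℝ) :
    ∫ x, (a ⬝ᵥ x) ^ 2 ∂(Measure.pi fun _ ↦ ν) = (∫ z, z ^ 2 ∂ν) * (a ⬝ᵥ a) := by
  induction m with
  | zero => simp
  | succ m ih =>
    have h1 : ∫ z, a (Fin.last m) * z ∂ν = 0 := by rw [integral_const_mul, hν1, mul_zero]
    simp only [integral_pi_succ_eq_integral_prod, dotProduct_snoc]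
    rw [integral_add_sq_prod (memLp_dotProduct_pi hν _) (hν.const_mul (a (Fin.last m))) h1, ih,
      dotProduct_self_succ]
    simp only [mul_pow, integral_const_mul]
    ring

lemma integral_pow_four_dotProduct_pi_le (hν : MemLp (fun z ↦ z) 4 ν) (hν1 : ∫ z, z ∂ν = 0)
    (hν3 : ∫ z, z ^ 3 ∂ν = 0) (hν4 : 3 * (∫ z, z ^ 2 ∂ν) ^ 2 ≤ ∫ z, z ^ 4 ∂ν) (a : Fin m → ℝ) :
    ∫ x, (a ⬝ᵥ x) ^ 4 ∂(Measure.pi fun _ ↦ ν) ≤ (∫ z, z ^ 4 ∂ν) * (a ⬝ᵥ a) ^ 2 := by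
  have hν2 : MemLp (fun z ↦ z) 2 ν := hν.mono_exponent (by norm_num)
  induction m with
  | zero => simp
  | succ m ih =>
    have h1 : ∫ z, a (Fin.last m) * z ∂ν = 0 := by rw [integral_const_mul, hν1, mul_zero]
    have h3 : ∫ z, (a (Fin.last m) * z) ^ 3 ∂ν = 0 := by
      simp only [mul_pow, integral_const_mul, hν3, mul_zero]
    simp only [integral_pi_succ_eq_integral_prod, dotProduct_snoc]
    rw [integral_add_pow_four_prod (memLp_dotProduct_pi hν _) (hν.const_mul (a (Fin.last m))) h1 h3,
      integral_sq_dotProduct_pi hν2 hν1, dotProduct_self_succ]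
    simp only [mul_pow, integral_const_mul]
    set S := Fin.init a ⬝ᵥ Fin.init a
    set t := a (Fin.last m)
    have hS : 0 ≤ S := Finset.sum_nonneg fun i _ ↦ mul_self_nonneg _
    have hcross : 0 ≤ S * t ^ 2 := by positivity
    nlinarith [ih (Fin.init a), mul_le_mul_of_nonneg_right hν4 hcross]

lemma integrable_sq_dotProduct_mul_sq_pi (hν : MemLp (fun z ↦ z) 4 ν) (a b : Fin m → ℝ) :
    Integrable (fun x ↦ (a ⬝ᵥ x) ^ 2 * (b ⬝ᵥ x) ^ 2) (Measure.pi fun _ ↦ ν) := by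
  have h4 (c : Fin m → ℝ) : Integrable (fun x ↦ (c ⬝ᵥ x) ^ 4) (Measure.pi fun _ ↦ ν) :=
    integrable_pow_of_memLp (memLp_dotProduct_pi hν c) le_rfl
  refine ((h4 a).add (h4 b)).mono' (by unfold dotProduct; fun_prop) (ae_of_all _ fun x ↦ ?_)
  rw [Real.norm_of_nonneg (by positivity), Pi.add_apply]
  nlinarith [sq_nonneg ((a ⬝ᵥ x) ^ 2 - (b ⬝ᵥ x) ^ 2), sq_nonneg ((a ⬝ᵥ x) ^ 2),
    sq_nonneg ((b ⬝ᵥ x) ^ 2)]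

lemma integral_sq_dotProduct_mul_sq_pi_le (hν : MemLp (fun z ↦ z) 4 ν) (hν1 : ∫ z, z ∂ν = 0)
    (hν3 : ∫ z, z ^ 3 ∂ν = 0) (hν4 : 3 * (∫ z, z ^ 2 ∂ν) ^ 2 ≤ ∫ z, z ^ 4 ∂ν) (a b : Fin m → ℝ) :
    ∫ x, (a ⬝ᵥ x) ^ 2 * (b ⬝ᵥ x) ^ 2 ∂(Measure.pi fun _ ↦ ν) ≤
      (∫ z, z ^ 4 ∂ν) * ((a ⬝ᵥ a) * (b ⬝ᵥ b)) := by
  obtain rfl | ha := eq_or_ne a 0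
  · simp
  obtain rfl | hb := eq_or_ne b 0
  · simp
  have hpos {c : Fin m → ℝ} (hc : c ≠ 0) : 0 < c ⬝ᵥ c :=
    (Finset.sum_nonneg fun i _ ↦ mul_self_nonneg (c i)).lt_of_ne' (dotProduct_self_eq_zero.not.2 hc)
  have h4 (c : Fin m → ℝ) : Integrable (fun x ↦ (c ⬝ᵥ x) ^ 4) (Measure.pi fun _ ↦ ν) :=
    integrable_pow_of_memLp (memLp_dotProduct_pi hν c) le_rfl
  have hA := hpos ha
  have hB := hpos hb
  set A := a ⬝ᵥ a
  set B := b ⬝ᵥ b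
  -- AM-GM, with the weights that balance the two quartic bounds
  have hamgm (x : Fin m → ℝ) : (a ⬝ᵥ x) ^ 2 * (b ⬝ᵥ x) ^ 2 ≤
      B / (2 * A) * (a ⬝ᵥ x) ^ 4 + A / (2 * B) * (b ⬝ᵥ x) ^ 4 := by
    field_simp
    nlinarith [sq_nonneg (B * (a ⬝ᵥ x) ^ 2 - A * (b ⬝ᵥ x) ^ 2)]
  calc ∫ x, (a ⬝ᵥ x) ^ 2 * (b ⬝ᵥ x) ^ 2 ∂(Measure.pi fun _ ↦ ν)
      ≤ ∫ x, (B / (2 * A) * (a ⬝ᵥ x) ^ 4 + A / (2 * B) * (b ⬝ᵥ x) ^ 4) ∂(Measure.pi fun _ ↦ ν) :=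
        integral_mono (integrable_sq_dotProduct_mul_sq_pi hν a b)
          (((h4 a).const_mul _).add ((h4 b).const_mul _)) hamgm
    _ = B / (2 * A) * ∫ x, (a ⬝ᵥ x) ^ 4 ∂(Measure.pi fun _ ↦ ν) +
          A / (2 * B) * ∫ x, (b ⬝ᵥ x) ^ 4 ∂(Measure.pi fun _ ↦ ν) := by
        rw [integral_add ((h4 a).const_mul _) ((h4 b).const_mul _), integral_const_mul,
          integral_const_mul]
    _ ≤ B / (2 * A) * ((∫ z, z ^ 4 ∂ν) * A ^ 2) + A / (2 * B) * ((∫ z, z ^ 4 ∂ν) * B ^ 2) := by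
        gcongr <;> exact integral_pow_four_dotProduct_pi_le hν hν1 hν3 hν4 _
    _ = (∫ z, z ^ 4 ∂ν) * (A * B) := by
        field_simp
        ring

end Pi

lemma integrable_pow_gaussianReal (v : ℝ≥0) (k : ℕ) :
    Integrable (fun z ↦ z ^ k) (gaussianReal 0 v) := by
  have h := (memLp_id_gaussianReal (μ := 0) (v := v) (k : ℝ≥0)).integrable_norm_pow' (p := k)
  exact h.mono (by fun_prop) (by simp)

lemma hasDerivAt_gaussianPDFReal (m : ℝ) (v : ℝ≥0) (z : ℝ) :
    HasDerivAt (gaussianPDFReal m v) (-((z - m) / v) * gaussianPDFReal m v z) z := by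
  have h := (((((hasDerivAt_id z).sub_const m).pow 2).neg.div_const (2 * (v : ℝ))).exp).const_mul
    (√(2 * π * v))⁻¹
  convert! h using 1
  simp only [gaussianPDFReal, id_eq, Pi.neg_apply, Pi.pow_apply, Nat.cast_ofNat,
    Nat.add_one_sub_one, pow_one, mul_one]
  field_simp

lemma integrable_gaussianReal_iff {m : ℝ} {v : ℝ≥0} (hv : v ≠ 0) {f : ℝ → ℝ} :
    Integrable f (gaussianReal m v) ↔ Integrable (fun z ↦ f z * gaussianPDFReal m v z) := by
  rw [gaussianReal_of_var_ne_zero m hv, integrable_withDensity_iff (by fun_prop)]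
  · simp [toReal_gaussianPDF]
  · exact ae_of_all _ fun z ↦ gaussianPDF_lt_top

lemma integral_id_mul_gaussianReal {v : ℝ≥0} {f f' : ℝ → ℝ} (hf : ∀ z, HasDerivAt f (f' z) z)
    (hfi : Integrable f (gaussianReal 0 v)) (hfi' : Integrable f' (gaussianReal 0 v))
    (hzf : Integrable (fun z ↦ z * f z) (gaussianReal 0 v)) :
    ∫ z, z * f z ∂(gaussianReal 0 v) = v * ∫ z, f' z ∂(gaussianReal 0 v) := by
  obtain rfl | hv := eq_or_ne v 0
  · simp
  rw [integrable_gaussianReal_iff hv] at hfi hfi' hzf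
  have hparts := integral_mul_deriv_eq_deriv_mul_of_integrable
    (fun z _ ↦ hf z) (fun z _ ↦ hasDerivAt_gaussianPDFReal 0 v z)
    ((hzf.const_mul (-(v : ℝ)⁻¹)).congr (ae_of_all _ fun z ↦ ?_)) hfi' hfi
  · simp only [integral_gaussianReal_eq_integral_smul hv, smul_eq_mul]
    calc ∫ z, gaussianPDFReal 0 v z * (z * f z)
        = -v * ∫ z, f z * (-((z - 0) / v) * gaussianPDFReal 0 v z) := by
          rw [← integral_const_mul]
          congr with z
          field_simp
          ring
      _ = v * ∫ z, gaussianPDFReal 0 v z * f' z := by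
          rw [hparts, neg_mul_neg]
          simp only [mul_comm]
  · simp only [Pi.mul_apply]
    ring

lemma integral_pow_add_two_gaussianReal (v : ℝ≥0) (k : ℕ) :
    ∫ z, z ^ (k + 2) ∂(gaussianReal 0 v) = v * ((k + 1) * ∫ z, z ^ k ∂(gaussianReal 0 v)) := by
  have h := integral_id_mul_gaussianReal (v := v) (hasDerivAt_pow (k + 1))
    (integrable_pow_gaussianReal v (k + 1))
    ((integrable_pow_gaussianReal v k).const_mul ((k + 1 : ℕ) : ℝ))
    ((integrable_pow_gaussianReal v (k + 2)).congr (ae_of_all _ fun z ↦ pow_succ' z (k + 1)))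
  simpa only [← pow_succ', Nat.add_sub_cancel, integral_const_mul, Nat.cast_add_one] using h

lemma integral_pow_three_gaussianReal (v : ℝ≥0) : ∫ z, z ^ 3 ∂(gaussianReal 0 v) = 0 := by
  simp [integral_pow_add_two_gaussianReal v 1]

lemma integral_sq_gaussianReal (v : ℝ≥0) : ∫ z, z ^ 2 ∂(gaussianReal 0 v) = v := by
  simp [integral_pow_add_two_gaussianReal v 0]

lemma integral_pow_four_gaussianReal (v : ℝ≥0) :
    ∫ z, z ^ 4 ∂(gaussianReal 0 v) = 3 * v ^ 2 := by
  rw [integral_pow_add_two_gaussianReal v 2, integral_sq_gaussianReal]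
  push_cast
  ring

instance bg.instIsProbabilityMeasure (θ : unitInterval) : IsProbabilityMeasure (bg θ) where
  measure_univ := by
    have h0 : (0 : ℝ) ≤ θ := θ.2.1
    have h1 : (0 : ℝ) ≤ 1 - θ := sub_nonneg.2 θ.2.2
    have h : bg θ Set.univ = (θ : ℝ).toNNReal + (1 - (θ : ℝ)).toNNReal := by simp [bg]
    rw [h, ← ENNReal.coe_add, ← Real.toNNReal_add h0 h1, add_sub_cancel, Real.toNNReal_one,
      ENNReal.coe_one]

instance bgVec.instIsProbabilityMeasure (θ : unitInterval) (n : ℕ) :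
    IsProbabilityMeasure (bgVec θ n) := by
  unfold bgVec
  infer_instance

lemma memLp_id_bg (θ : ℝ) {p : ℝ≥0∞} (hp0 : p ≠ 0) (hp : p ≠ ∞) :
    MemLp (fun z ↦ z) p (bg θ) := by
  rw [← integrable_norm_rpow_iff (by fun_prop) hp0 hp, bg]
  exact ((memLp_id_gaussianReal' p hp).integrable_norm_rpow hp0 hp).smul_measure_nnreal.add_measure
    (integrable_dirac (by simp)).smul_measure_nnreal

lemma integral_bg (θ : unitInterval) {f : ℝ → ℝ} (hf : Integrable f (gaussianReal 0 1)) :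
    ∫ z, f z ∂(bg θ) = θ * ∫ z, f z ∂(gaussianReal 0 1) + (1 - θ) * f 0 := by
  have hdirac : Integrable f (Measure.dirac 0) := integrable_dirac (by simp)
  rw [bg, integral_add_measure hf.smul_measure_nnreal hdirac.smul_measure_nnreal,
    integral_smul_nnreal_measure, integral_smul_nnreal_measure, integral_dirac]
  simp [NNReal.smul_def, θ.2.1, θ.2.2]

lemma integral_pow_bg (θ : unitInterval) {k : ℕ} (hk : k ≠ 0) :
    ∫ z, z ^ k ∂(bg θ) = θ * ∫ z, z ^ k ∂(gaussianReal 0 1) := by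
  simp [integral_bg θ (integrable_pow_gaussianReal 1 k), hk]

lemma integral_id_bg (θ : unitInterval) : ∫ z, z ∂(bg θ) = 0 := by
  simpa using integral_pow_bg θ one_ne_zero

lemma integral_sq_bg (θ : unitInterval) : ∫ z, z ^ 2 ∂(bg θ) = θ := by
  simp [integral_pow_bg θ two_ne_zero, integral_sq_gaussianReal]

lemma integral_abs_bg_le (θ : unitInterval) : ∫ z, |z| ∂(bg θ) ≤ θ := by
  have habs : Integrable (fun z ↦ |z|) (gaussianReal 0 1) := by
    simpa only [pow_one] using (integrable_pow_gaussianReal 1 1).abs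
  have hsq : Integrable (fun z ↦ 1 / 2 * z ^ 2) (gaussianReal 0 1) :=
    (integrable_pow_gaussianReal 1 2).const_mul _
  have hle : ∫ z, |z| ∂(gaussianReal 0 1) ≤ 1 :=
    calc ∫ z, |z| ∂(gaussianReal 0 1) ≤ ∫ z, (1 / 2 + 1 / 2 * z ^ 2) ∂(gaussianReal 0 1) := by
          refine integral_mono habs ((integrable_const _).add hsq) fun z ↦ ?_
          nlinarith [sq_nonneg (|z| - 1), sq_abs z]
      _ = 1 := by
          rw [integral_add (integrable_const _) hsq, integral_const_mul, integral_sq_gaussianReal]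
          norm_num
  simpa [integral_bg θ habs] using mul_le_of_le_one_right θ.2.1 hle

lemma one_sub_mul_le_integral_bg (θ : unitInterval) {f : ℝ → ℝ} (hf : ∀ z, 0 ≤ f z)
    (hfi : Integrable f (bg θ)) : (1 - θ) * f 0 ≤ ∫ z, f z ∂(bg θ) := by
  have hle : (1 - (θ : ℝ)).toNNReal • Measure.dirac 0 ≤ bg θ := Measure.le_add_left le_rfl
  calc (1 - θ) * f 0 = ∫ z, f z ∂((1 - (θ : ℝ)).toNNReal • Measure.dirac 0) := by
        simp [integral_smul_nnreal_measure, NNReal.smul_def, θ.2.2]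
    _ ≤ ∫ z, f z ∂(bg θ) := integral_mono_measure hle (ae_of_all _ hf) hfi

lemma one_sub_mul_integral_le_integral_prod_bg {α : Type*} [MeasurableSpace α] {P : Measure α}
    [SFinite P] (θ : unitInterval) {f : α × ℝ → ℝ} (hf : ∀ p, 0 ≤ f p)
    (hfi : Integrable f (P.prod (bg θ))) :
    (1 - θ) * ∫ x, f (x, 0) ∂P ≤ ∫ p, f p ∂(P.prod (bg θ)) := by
  have h1 : (0 : ℝ) ≤ 1 - θ := sub_nonneg.2 θ.2.2
  rw [integral_prod f hfi, ← integral_const_mul]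
  refine integral_mono_of_nonneg (ae_of_all _ fun x ↦ mul_nonneg h1 (hf _))
    hfi.integral_prod_left ?_
  filter_upwards [hfi.prod_right_ae] with x hx
  exact one_sub_mul_le_integral_bg θ (fun z ↦ hf (x, z)) hx

lemma hasDerivAt_hmu {μ : ℝ} (hμ : μ ≠ 0) (z : ℝ) : HasDerivAt (hmu μ) (tanh (z / μ)) z := by
  have h := ((((hasDerivAt_id' z).div_const μ).cosh).log (cosh_pos _).ne').const_mul μ
  convert! h using 1
  rw [Real.tanh_eq_sinh_div_cosh]
  field_simp

lemma hasDerivAt_tanh_div (μ z : ℝ) :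
    HasDerivAt (fun z ↦ tanh (z / μ)) ((cosh (z / μ) ^ 2)⁻¹ / μ) z := by
  have hdiv : HasDerivAt (fun z ↦ z / μ) (1 / μ) z := (hasDerivAt_id' z).div_const μ
  have h := hdiv.sinh.fun_div hdiv.cosh (cosh_pos (z / μ)).ne'
  simp only [Real.tanh_eq_sinh_div_cosh]
  convert! h using 1
  rw [inv_div_left]
  linear_combination (-(1 / μ) * (cosh (z / μ) ^ 2)⁻¹) * Real.cosh_sq (z / μ)

lemma one_sub_sq_le_inv_cosh_sq (t : ℝ) : 1 - t ^ 2 ≤ (cosh t ^ 2)⁻¹ :=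
  calc 1 - t ^ 2 ≤ rexp (-t ^ 2) := by linarith [Real.add_one_le_exp (-t ^ 2)]
    _ = (rexp (t ^ 2 / 2) ^ 2)⁻¹ := by
      rw [← Real.exp_nat_mul, ← Real.exp_neg]
      congr 1
      push_cast
      ring
    _ ≤ (cosh t ^ 2)⁻¹ := by
      gcongr
      exact Real.cosh_le_exp_half_sq t

lemma inv_cosh_sq_le_one (t : ℝ) : (cosh t ^ 2)⁻¹ ≤ 1 :=
  inv_le_one_of_one_le₀ (one_le_pow₀ (Real.one_le_cosh t))

lemma abs_inv_cosh_sq_div_le {μ : ℝ} (hμ : 0 ≤ μ) (t : ℝ) : |(cosh t ^ 2)⁻¹ / μ| ≤ 1 / μ := by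
  rw [abs_of_nonneg (by positivity)]
  gcongr
  exact inv_cosh_sq_le_one t

lemma continuous_inv_cosh_sq_div (μ : ℝ) : Continuous fun z : ℝ ↦ (cosh (z / μ) ^ 2)⁻¹ / μ :=
  (((continuous_cosh.comp (continuous_id.div_const μ)).pow 2).inv₀
    fun _ ↦ (pow_pos (cosh_pos _) 2).ne').div_const μ

lemma integrable_inv_cosh_sq_mul {α : Type*} [MeasurableSpace α] {P : Measure α} {μ : ℝ}
    (hμ : 0 ≤ μ) {X Y : α → ℝ} (hX : AEStronglyMeasurable X P) (hY : MemLp Y 2 P) :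
    Integrable (fun ω ↦ (cosh (X ω / μ) ^ 2)⁻¹ / μ * (Y ω * Y ω)) P := by
  refine Integrable.bdd_mul (c := 1 / μ) (by simpa only [sq] using hY.integrable_sq)
    ((continuous_inv_cosh_sq_div μ).comp_aestronglyMeasurable hX)
    (ae_of_all _ fun ω ↦ abs_inv_cosh_sq_div_le hμ _)

section Objective

variable {m : ℕ}

/-- The linear form `q ↦ qᵀx` on `ℝ^m × ℝ`, for a sample `x = (ω.1, ω.2)` of `ℝ^(m+1)` whose last
coordinate is split off to match `sphereChart`. -/
def sampleForm (ω : (Fin m → ℝ) × ℝ) : EuclideanSpace ℝ (Fin m) × ℝ →L[ℝ] ℝ :=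
  innerSL ℝ (WithLp.toLp 2 ω.1) ∘L .fst ℝ _ ℝ + ω.2 • .snd ℝ _ ℝ

lemma sampleForm_apply (ω : (Fin m → ℝ) × ℝ) (q : EuclideanSpace ℝ (Fin m) × ℝ) :
    sampleForm ω q = ⟪WithLp.toLp 2 ω.1, q.1⟫ + ω.2 * q.2 := rfl

lemma sampleForm_apply_zero_snd (x : Fin m → ℝ) (q : EuclideanSpace ℝ (Fin m) × ℝ) :
    sampleForm (x, 0) q = ⟪WithLp.toLp 2 x, q.1⟫ := by
  simp [sampleForm_apply]

lemma memLp_sampleForm (θ : unitInterval) {p : ℝ≥0∞} (hp0 : p ≠ 0) (hp : p ≠ ∞) :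
    MemLp (sampleForm (m := m)) p ((bgVec θ m).prod (bg θ)) := by
  have hvec : MemLp (WithLp.toLp 2 : (Fin m → ℝ) → EuclideanSpace ℝ (Fin m)) p (bgVec θ m) :=
    MemLp.of_eval_piLp fun i ↦ memLp_eval_pi (memLp_id_bg θ hp0 hp) i
  have hinner := (innerSL ℝ (E := EuclideanSpace ℝ (Fin m))).comp_memLp' hvec
  have hfst := (ContinuousLinearMap.precomp ℝ
    (ContinuousLinearMap.fst ℝ (EuclideanSpace ℝ (Fin m)) ℝ)).comp_memLp' hinner
  have hsnd := (ContinuousLinearMap.toSpanSingleton ℝ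
    (ContinuousLinearMap.snd ℝ (EuclideanSpace ℝ (Fin m)) ℝ)).comp_memLp' (memLp_id_bg θ hp0 hp)
  exact (hfst.comp_fst _).add (hsnd.comp_snd _)

lemma Gexp_succ (m : ℕ) (θ μ : ℝ) :
    Gexp (m + 1) θ μ = fun w : EuclideanSpace ℝ (Fin m) ↦
      ∫ ω, hmu μ (sampleForm ω (sphereChart w)) ∂((bgVec θ m).prod (bg θ)) := by
  funext w
  rw [Gexp, bgVec, integral_pi_succ_eq_integral_prod, ← bgVec]
  refine integral_congr_ae (ae_of_all _ fun ω ↦ congrArg (hmu μ) ?_)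
  simp [Fin.sum_univ_castSucc, qmap, sampleForm_apply, sphereChart, PiLp.inner_apply, mul_comm]

lemma inner_toLp_eq_dotProduct (x : Fin m → ℝ) (v : EuclideanSpace ℝ (Fin m)) :
    ⟪WithLp.toLp 2 x, v⟫ = v.ofLp ⬝ᵥ x := by
  simp [PiLp.inner_apply, dotProduct]

lemma dotProduct_ofLp_self (v : EuclideanSpace ℝ (Fin m)) : v.ofLp ⬝ᵥ v.ofLp = ‖v‖ ^ 2 := by
  rw [EuclideanSpace.real_norm_sq_eq]
  simp only [dotProduct, sq]

lemma integral_inner_sq_bgVec (θ : unitInterval) (v : EuclideanSpace ℝ (Fin m)) :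
    ∫ x, ⟪WithLp.toLp 2 x, v⟫ ^ 2 ∂(bgVec θ m) = θ * ‖v‖ ^ 2 := by
  simp only [inner_toLp_eq_dotProduct]
  rw [bgVec, integral_sq_dotProduct_pi (memLp_id_bg θ (by simp) (by simp)) (integral_id_bg θ),
    integral_sq_bg, dotProduct_ofLp_self]

lemma integrable_inner_sq_mul_inner_sq_bgVec (θ : unitInterval) (w v : EuclideanSpace ℝ (Fin m)) :
    Integrable (fun x ↦ ⟪WithLp.toLp 2 x, w⟫ ^ 2 * ⟪WithLp.toLp 2 x, v⟫ ^ 2) (bgVec θ m) := by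
  simp only [inner_toLp_eq_dotProduct]
  exact integrable_sq_dotProduct_mul_sq_pi (memLp_id_bg θ (by simp) (by simp)) _ _

lemma integral_inner_sq_mul_inner_sq_bgVec_le (θ : unitInterval)
    (w v : EuclideanSpace ℝ (Fin m)) :
    ∫ x, ⟪WithLp.toLp 2 x, w⟫ ^ 2 * ⟪WithLp.toLp 2 x, v⟫ ^ 2 ∂(bgVec θ m) ≤
      3 * θ * (‖w‖ ^ 2 * ‖v‖ ^ 2) := by
  have hcube : ∫ z, z ^ 3 ∂(bg θ) = 0 := by
    simp [integral_pow_bg θ three_ne_zero, integral_pow_three_gaussianReal]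
  have hfour : ∫ z, z ^ 4 ∂(bg θ) = 3 * θ := by
    simp [integral_pow_bg θ four_ne_zero, integral_pow_four_gaussianReal, mul_comm]
  have hkurtosis : 3 * (∫ z, z ^ 2 ∂(bg θ)) ^ 2 ≤ ∫ z, z ^ 4 ∂(bg θ) := by
    rw [integral_sq_bg, hfour]
    nlinarith [θ.2.1, θ.2.2]
  simp only [inner_toLp_eq_dotProduct, ← dotProduct_ofLp_self, ← hfour]
  exact integral_sq_dotProduct_mul_sq_pi_le (memLp_id_bg θ (by simp) (by simp))
    (integral_id_bg θ) hcube hkurtosis _ _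

lemma le_integral_inv_cosh_sq_mul_bgVec (θ : unitInterval) {μ : ℝ} (hμ : 0 < μ)
    (w v : EuclideanSpace ℝ (Fin m)) :
    θ * (1 - 3 * ‖w‖ ^ 2 / μ ^ 2) / μ * ‖v‖ ^ 2 ≤
      ∫ x, (cosh (⟪WithLp.toLp 2 x, w⟫ / μ) ^ 2)⁻¹ / μ *
        (⟪WithLp.toLp 2 x, v⟫ * ⟪WithLp.toLp 2 x, v⟫) ∂(bgVec θ m) := by
  have hmem (u : EuclideanSpace ℝ (Fin m)) :
      MemLp (fun x ↦ ⟪WithLp.toLp 2 x, u⟫) 2 (bgVec θ m) := by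
    simp only [inner_toLp_eq_dotProduct]
    exact memLp_dotProduct_pi (memLp_id_bg θ (by simp) (by simp)) _
  have hsq := (hmem v).integrable_sq.const_mul (1 / μ)
  have hquartic := (integrable_inner_sq_mul_inner_sq_bgVec θ w v).const_mul (1 / μ ^ 3)
  calc θ * (1 - 3 * ‖w‖ ^ 2 / μ ^ 2) / μ * ‖v‖ ^ 2
      = 1 / μ * (θ * ‖v‖ ^ 2) - 1 / μ ^ 3 * (3 * θ * (‖w‖ ^ 2 * ‖v‖ ^ 2)) := by field_simp
    _ ≤ ∫ x, (1 / μ * ⟪WithLp.toLp 2 x, v⟫ ^ 2 - 1 / μ ^ 3 *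
          (⟪WithLp.toLp 2 x, w⟫ ^ 2 * ⟪WithLp.toLp 2 x, v⟫ ^ 2)) ∂(bgVec θ m) := by
        rw [integral_sub hsq hquartic, integral_const_mul, integral_const_mul,
          integral_inner_sq_bgVec]
        gcongr
        exact integral_inner_sq_mul_inner_sq_bgVec_le θ w v
    _ ≤ _ := by
        refine integral_mono (hsq.sub hquartic)
          (integrable_inv_cosh_sq_mul hμ.le (hmem w).1 (hmem v)) fun x ↦ ?_
        calc _ = (1 - (⟪WithLp.toLp 2 x, w⟫ / μ) ^ 2) / μ *
              (⟪WithLp.toLp 2 x, v⟫ * ⟪WithLp.toLp 2 x, v⟫) := by field_simp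
          _ ≤ _ := by
            gcongr
            · exact mul_self_nonneg _
            · exact one_sub_sq_le_inv_cosh_sq _

lemma le_integral_inv_cosh_sq_mul_sampleForm (θ : unitInterval) {μ : ℝ} (hμ : 0 < μ)
    (q u : EuclideanSpace ℝ (Fin m) × ℝ) :
    (1 - θ) * (θ * (1 - 3 * ‖q.1‖ ^ 2 / μ ^ 2) / μ * ‖u.1‖ ^ 2) ≤
      ∫ ω, (cosh (sampleForm ω q / μ) ^ 2)⁻¹ / μ * (sampleForm ω u * sampleForm ω u)
        ∂((bgVec θ m).prod (bg θ)) := by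
  have hL := memLp_sampleForm (m := m) θ (p := 2) (by simp) (by simp)
  have hint := integrable_inv_cosh_sq_mul hμ.le (hL.1.apply_continuousLinearMap q)
    ((ContinuousLinearMap.apply ℝ ℝ u).comp_memLp' hL)
  have hslice := one_sub_mul_integral_le_integral_prod_bg θ
    (fun _ ↦ mul_nonneg (by positivity) (mul_self_nonneg _)) hint
  simp only [Function.comp_apply, ContinuousLinearMap.apply_apply, sampleForm_apply_zero_snd]
    at hslice
  have hθ1 : 0 ≤ 1 - (θ : ℝ) := sub_nonneg.2 θ.2.2
  exact (mul_le_mul_of_nonneg_left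
    (le_integral_inv_cosh_sq_mul_bgVec θ hμ q.1 u.1) hθ1).trans hslice

lemma abs_integral_mul_snd_prod_bg_le {α : Type*} [MeasurableSpace α] {P : Measure α}
    [IsProbabilityMeasure P] (θ : unitInterval) {g : α × ℝ → ℝ} (hg : ∀ p, |g p| ≤ 1) :
    |∫ p, g p * p.2 ∂(P.prod (bg θ))| ≤ θ := by
  have habs : Integrable (fun z ↦ |z|) (bg θ) :=
    ((memLp_id_bg θ one_ne_zero ENNReal.one_ne_top).integrable le_rfl).abs
  calc |∫ p, g p * p.2 ∂(P.prod (bg θ))| ≤ ∫ p, |p.2| ∂(P.prod (bg θ)) := by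
        rw [← Real.norm_eq_abs]
        refine norm_integral_le_of_norm_le (habs.comp_snd P) (ae_of_all _ fun p ↦ ?_)
        rw [norm_mul]
        exact mul_le_of_le_one_left (abs_nonneg _) (hg p)
    _ = ∫ z, |z| ∂(bg θ) := by rw [integral_fun_snd (fun z : ℝ ↦ |z|), probReal_univ, one_smul]
    _ ≤ θ := integral_abs_bg_le θ

lemma fderiv_fderiv_Gexp_apply_self (θ : unitInterval) {μ : ℝ} (hμ : 0 < μ)
    {w : EuclideanSpace ℝ (Fin m)} (hw : ‖w‖ < 1) (v : EuclideanSpace ℝ (Fin m)) :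
    fderiv ℝ (fderiv ℝ (Gexp (m + 1) θ μ)) w v v =
      ∫ ω, (cosh (sampleForm ω (sphereChart w) / μ) ^ 2)⁻¹ / μ *
        (sampleForm ω (fderiv ℝ sphereChart w v) * sampleForm ω (fderiv ℝ sphereChart w v))
        ∂((bgVec θ m).prod (bg θ)) -
      (∫ ω, tanh (sampleForm ω (sphereChart w) / μ) * ω.2 ∂((bgVec θ m).prod (bg θ))) *
        (‖v‖ ^ 2 / √(1 - ‖w‖ ^ 2) + ⟪w, v⟫ ^ 2 / √(1 - ‖w‖ ^ 2) ^ 3) := by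
  rw [Gexp_succ, fderiv_fderiv_integral_comp_apply (hasDerivAt_hmu hμ.ne') (hasDerivAt_tanh_div μ)
    (fun _ ↦ (abs_tanh_lt_one _).le) (fun _ ↦ abs_inv_cosh_sq_div_le hμ.le _)
    (memLp_sampleForm θ (by simp) (by simp)) (contDiffAt_sphereChart hw),
    fderiv_fderiv_sphereChart_apply hw, ← integral_mul_const]
  simp only [sampleForm_apply, inner_zero_right, zero_add, mul_neg, integral_neg, mul_assoc,
    sub_eq_add_neg]

lemma le_fderiv_fderiv_Gexp_apply_self (θ : unitInterval) {μ : ℝ} (hμ : 0 < μ)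
    {w : EuclideanSpace ℝ (Fin m)} (hw : ‖w‖ < 1) (v : EuclideanSpace ℝ (Fin m)) :
    θ * ((1 - θ) * (1 - 3 * ‖w‖ ^ 2 / μ ^ 2) / μ - 1 / √(1 - ‖w‖ ^ 2) ^ 3) * ‖v‖ ^ 2 ≤
      fderiv ℝ (fderiv ℝ (Gexp (m + 1) θ μ)) w v v := by
  have hsech := le_integral_inv_cosh_sq_mul_sampleForm θ hμ (sphereChart w)
    (fderiv ℝ sphereChart w v)
  have hq : (sphereChart w).1 = w := rfl
  have hu : (fderiv ℝ sphereChart w v).1 = v := by simp [fderiv_sphereChart hw]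
  rw [hq, hu] at hsech
  have htanh := (le_abs_self _).trans (abs_integral_mul_snd_prod_bg_le (P := bgVec θ m) θ
    (g := fun ω ↦ tanh (sampleForm ω (sphereChart w) / μ)) fun _ ↦ (abs_tanh_lt_one _).le)
  have hcurv := mul_le_mul htanh (norm_sq_div_add_inner_sq_div_le hw v) (by positivity) θ.2.1
  calc θ * ((1 - θ) * (1 - 3 * ‖w‖ ^ 2 / μ ^ 2) / μ - 1 / √(1 - ‖w‖ ^ 2) ^ 3) * ‖v‖ ^ 2
      = (1 - θ) * (θ * (1 - 3 * ‖w‖ ^ 2 / μ ^ 2) / μ * ‖v‖ ^ 2) -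
          θ * (‖v‖ ^ 2 / √(1 - ‖w‖ ^ 2) ^ 3) := by ring
    _ ≤ fderiv ℝ (fderiv ℝ (Gexp (m + 1) θ μ)) w v v := by
        rw [fderiv_fderiv_Gexp_apply_self θ hμ hw v]
        exact sub_le_sub hsech hcurv

end Objective

lemma inner_fderiv_gradient {E : Type*} [NormedAddCommGroup E] [InnerProductSpace ℝ E]
    [CompleteSpace E] (f : E → ℝ) (w u v : E) :
    ⟪fderiv ℝ (gradient f) w u, v⟫ = fderiv ℝ (fderiv ℝ f) w u v := by
  have h : gradient f = (InnerProductSpace.toDual ℝ E).symm ∘ fderiv ℝ f := rfl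
  rw [h, LinearIsometryEquiv.comp_fderiv]
  exact InnerProductSpace.toDual_symm_apply

lemma inv_sqrt_one_sub_sq_pow_three_le {t : ℝ} (ht : t ^ 2 ≤ 1 / 512) :
    1 / √(1 - t ^ 2) ^ 3 ≤ 4 / 3 := by
  have hr : 15 / 16 ≤ √(1 - t ^ 2) := Real.le_sqrt_of_sq_le (by norm_num; linarith)
  calc 1 / √(1 - t ^ 2) ^ 3 ≤ 1 / (15 / 16) ^ 3 := by gcongr
    _ ≤ 4 / 3 := by norm_num

lemma div_five_mul_sqrt_two_pi_mul_le {θ μ : ℝ} (hθ : 0 ≤ θ) (hμ : 0 < μ) :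
    θ / (5 * √(2 * π) * μ) ≤ θ * (1 / (10 * μ)) := by
  have h2 : 2 ≤ √(2 * π) := Real.le_sqrt_of_sq_le (by linarith [Real.pi_gt_three])
  calc θ / (5 * √(2 * π) * μ) ≤ θ / (5 * 2 * μ) := by gcongr
    _ = θ * (1 / (10 * μ)) := by ring

theorem statement6_general (m : ℕ) (θ μ : ℝ) (hθ : θ ∈ Set.Icc (0 : ℝ) (1 / 2)) (hμ0 : 0 < μ)
    (hμ : μ ≤ 1 / 4) (w : EuclideanSpace ℝ (Fin m)) (hw : ‖w‖ ≤ μ / (4 * √2))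
    (v : EuclideanSpace ℝ (Fin m)) :
    θ / (5 * √(2 * π) * μ) * ‖v‖ ^ 2 ≤ ⟪fderiv ℝ (gradient (Gexp (m + 1) θ μ)) w v, v⟫ := by
  obtain ⟨hθ0, hθ2⟩ := hθ
  have hw2 : ‖w‖ ^ 2 ≤ μ ^ 2 / 32 :=
    calc ‖w‖ ^ 2 ≤ (μ / (4 * √2)) ^ 2 := by gcongr
      _ = μ ^ 2 / 32 := by
        rw [div_pow, mul_pow, Real.sq_sqrt zero_le_two]
        norm_num
  have hw512 : ‖w‖ ^ 2 ≤ 1 / 512 := by nlinarith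
  have hw1 : ‖w‖ < 1 := by nlinarith [norm_nonneg w]
  have hmain : (29 / 64) / μ ≤ (1 - θ) * (1 - 3 * ‖w‖ ^ 2 / μ ^ 2) / μ := by
    have hquartic : 3 * ‖w‖ ^ 2 / μ ^ 2 ≤ 3 / 32 := by
      rw [div_le_iff₀ (by positivity)]
      linarith
    gcongr
    nlinarith
  have hcurv : 1 / √(1 - ‖w‖ ^ 2) ^ 3 ≤ (1 / 3) / μ :=
    (inv_sqrt_one_sub_sq_pow_three_le hw512).trans (by rw [le_div_iff₀ hμ0]; linarith)
  have hten : 1 / (10 * μ) ≤ (29 / 64) / μ - (1 / 3) / μ := by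
    rw [← sub_div, ← div_div]
    gcongr
    norm_num
  calc θ / (5 * √(2 * π) * μ) * ‖v‖ ^ 2 ≤ θ * (1 / (10 * μ)) * ‖v‖ ^ 2 := by
        gcongr
        exact div_five_mul_sqrt_two_pi_mul_le hθ0 hμ0
    _ ≤ θ * ((1 - θ) * (1 - 3 * ‖w‖ ^ 2 / μ ^ 2) / μ - 1 / √(1 - ‖w‖ ^ 2) ^ 3) * ‖v‖ ^ 2 := by
        gcongr
        linarith
    _ ≤ fderiv ℝ (fderiv ℝ (Gexp (m + 1) θ μ)) w v v :=
        le_fderiv_fderiv_Gexp_apply_self ⟨θ, hθ0, hθ2.trans (by norm_num)⟩ hμ0 hw1 v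
    _ = ⟪fderiv ℝ (gradient (Gexp (m + 1) θ μ)) w v, v⟫ := (inner_fderiv_gradient _ w v v).symm

lemma one_div_twenty_mul_sqrt_succ_le (m : ℕ) : 1 / (20 * √(m + 1 : ℕ)) ≤ 1 / 4 := by
  have h1 : 1 ≤ √(m + 1 : ℕ) := by simp
  gcongr
  linarith

/-- Proposition: strong convexity region of the expected objective. -/
theorem statement6 (n : ℕ) (θ μ : ℝ) (hθ : θ ∈ Set.Ioo (0 : ℝ) (1 / 2)) (hμ0 : 0 < μ)
    (hμ : μ ≤ 1 / (20 * Real.sqrt n)) (w : EuclideanSpace ℝ (Fin (n - 1)))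
    (hw : ‖w‖ ≤ μ / (4 * Real.sqrt 2)) :
    ∀ v : EuclideanSpace ℝ (Fin (n - 1)),
      θ / (5 * Real.sqrt (2 * π) * μ) * ‖v‖ ^ 2 ≤
        ⟪fderiv ℝ (gradient (Gexp n θ μ)) w v, v⟫ := by
  obtain _ | m := n
  · exact absurd hμ (by simpa using hμ0)
  · exact statement6_general m θ μ (Set.Ioo_subset_Icc_self hθ) hμ0
      (hμ.trans (one_div_twenty_mul_sqrt_succ_le m)) w hw

end
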